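/- Expansion Law: for every parallel program π = η₁ ‖ ⋯ ‖ ηₙ of the DELWCA process calculus, π is strongly bisimilar to Exp(η₁ ‖ ⋯ ‖ ηₙ), i.e. to the summation of α.(η₁ ‖ ⋯ ‖ ηᵢ′ ‖ ⋯ ‖ ηₙ) over all single-component transitions ηᵢ →α ηᵢ′ together with τ_{i,j}.(η₁ ‖ ⋯ ‖ ηᵢ′ ‖ ⋯ ‖ η_j′ ‖ ⋯ ‖ ηₙ) over all pairs of matching communication transitions ηᵢ →c̄ ηᵢ′ and η_j →c η_j′. -/

import Mathlib

/-!
A parallel composition and its expansion have literally the same outgoing transitions: the same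
labels leading to the same residuals, `√` included (`trans_par_iff_trans_Exp`). Processes with the
same outgoing transitions are strongly bisimilar, because having the same outgoing transitions is
a bisimulation: each move is answered by the identical move, and the common residual is related to
itself (`Bisim.of_trans_iff`).

To compare the transitions, each ingredient of the expansion is read off from the semantics:
`steps η` lists exactly the transitions of a sequential program (`mem_steps`), a summation moves as
one of its summands does (`trans_sumOf`), and a summand `a.(η₁ ‖ ⋯ ‖ ηₙ)` has the single transition
`a` to `parRes` of the tuple, with `√` when all components have terminated (`trans_summand`). The
interleaving and communication summands then match the two rules for parallel composition.
-/


namespace DELWCA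

mutual
inductive Form (n : ℕ) (C P : Type) : Type where
  | atom : P → Form n C P
  | top : Form n C P
  | neg : Form n C P → Form n C P
  | and : Form n C P → Form n C P → Form n C P
  | imp : Form n C P → Form n C P → Form n C P
  | know : Fin n → Form n C P → Form n C P
  | box : Prog n C P → Form n C P → Form n C P

inductive Act (n : ℕ) (C P : Type) : Type where
  | am : (k : ℕ) → (Fin n → Fin k → Fin k → Bool) → (Fin k → Form n C P) → Fin k → Act n C P
  | inp : C → Act n C P
  | out : C → Act n C P
  | tau : Fin n → Fin n → C → Act n C P

inductive SProg (n : ℕ) (C P : Type) : Type where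
  | act : Act n C P → SProg n C P
  | pre : Act n C P → SProg n C P → SProg n C P
  | seq : SProg n C P → SProg n C P → SProg n C P
  | choice : SProg n C P → SProg n C P → SProg n C P

inductive Prog (n : ℕ) (C P : Type) : Type where
  | nil : Prog n C P
  | seqp : SProg n C P → Prog n C P
  | pre : Act n C P → Prog n C P → Prog n C P
  | seq : Prog n C P → Prog n C P → Prog n C P
  | choice : Prog n C P → Prog n C P → Prog n C P
  | par : (Fin n → Option (SProg n C P)) → Prog n C P
end

variable {n : ℕ} {C P : Type}

/-- Syntactic biconditional. -/
def Form.iff (φ ψ : Form n C P) : Form n C P := .and (.imp φ ψ) (.imp ψ φ)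

/-- `true` iff the action is not a bare communication action (input or output). -/
def Act.nonComm : Act n C P → Bool
  | .inp _ => false
  | .out _ => false
  | _ => true

/-- Labelled transitions of sequential programs; `none` is the termination marker √. -/
inductive STrans : SProg n C P → Act n C P → Option (SProg n C P) → Prop where
  | act {a : Act n C P} : STrans (.act a) a none
  | pre {a : Act n C P} {η : SProg n C P} : STrans (.pre a η) a (some η)
  | seq₁ {η₁ η₁' η₂ : SProg n C P} {a : Act n C P} :
      STrans η₁ a (some η₁') → STrans (.seq η₁ η₂) a (some (.seq η₁' η₂))
  | seq₂ {η₁ η₂ : SProg n C P} {a : Act n C P} :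
      STrans η₁ a none → STrans (.seq η₁ η₂) a (some η₂)
  | choiceL {η₁ η₂ : SProg n C P} {a : Act n C P} {r : Option (SProg n C P)} :
      STrans η₁ a r → STrans (.choice η₁ η₂) a r
  | choiceR {η₁ η₂ : SProg n C P} {a : Act n C P} {r : Option (SProg n C P)} :
      STrans η₂ a r → STrans (.choice η₁ η₂) a r

/-- Result of a transition of a parallel composition: if every component has
terminated the whole process terminates (√), otherwise it is again a parallel
composition. -/
def parRes (f : Fin n → Option (SProg n C P)) : Option (Prog n C P) :=
  if (List.finRange n).all (fun i => (f i).isNone) then none else some (.par f)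

/-- Labelled transitions of programs; `none` is the termination marker √. -/
inductive Trans : Prog n C P → Act n C P → Option (Prog n C P) → Prop where
  | seqp {η : SProg n C P} {a : Act n C P} {r : Option (SProg n C P)} :
      STrans η a r → Trans (.seqp η) a (r.map .seqp)
  | pre {a : Act n C P} {π : Prog n C P} : Trans (.pre a π) a (some π)
  | seq₁ {π₁ π₁' π₂ : Prog n C P} {a : Act n C P} :
      Trans π₁ a (some π₁') → Trans (.seq π₁ π₂) a (some (.seq π₁' π₂))
  | seq₂ {π₁ π₂ : Prog n C P} {a : Act n C P} :
      Trans π₁ a none → Trans (.seq π₁ π₂) a (some π₂)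
  | choiceL {π₁ π₂ : Prog n C P} {a : Act n C P} {r : Option (Prog n C P)} :
      Trans π₁ a r → Trans (.choice π₁ π₂) a r
  | choiceR {π₁ π₂ : Prog n C P} {a : Act n C P} {r : Option (Prog n C P)} :
      Trans π₂ a r → Trans (.choice π₁ π₂) a r
  | par_act {f : Fin n → Option (SProg n C P)} {i : Fin n} {η : SProg n C P}
      {a : Act n C P} {r : Option (SProg n C P)} :
      f i = some η → a.nonComm = true → STrans η a r →
      Trans (.par f) a (parRes (Function.update f i r))
  | par_comm {f : Fin n → Option (SProg n C P)} {i j : Fin n} {ηi ηj : SProg n C P}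
      {ch : C} {ri rj : Option (SProg n C P)} :
      i ≠ j → f i = some ηi → f j = some ηj →
      STrans ηi (.out ch) ri → STrans ηj (.inp ch) rj →
      Trans (.par f) (.tau i j ch) (parRes (Function.update (Function.update f i ri) j rj))

/-- Strong bisimulation. -/
def IsBisim (Z : Prog n C P → Prog n C P → Prop) : Prop :=
  ∀ π₁ π₂, Z π₁ π₂ →
    (∀ (a : Act n C P) (π₁' : Prog n C P), Trans π₁ a (some π₁') →
        ∃ π₂', Trans π₂ a (some π₂') ∧ Z π₁' π₂') ∧
    (∀ (a : Act n C P) (π₂' : Prog n C P), Trans π₂ a (some π₂') →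
        ∃ π₁', Trans π₁ a (some π₁') ∧ Z π₁' π₂') ∧
    (∀ a : Act n C P, Trans π₁ a none ↔ Trans π₂ a none)

/-- Strong bisimilarity. -/
def Bisim (π₁ π₂ : Prog n C P) : Prop := ∃ Z, IsBisim Z ∧ Z π₁ π₂

/-- The (finitely many) initial transitions of a sequential program. -/
def steps : SProg n C P → List (Act n C P × Option (SProg n C P))
  | .act a => [(a, none)]
  | .pre a η => [(a, some η)]
  | .seq η₁ η₂ =>
      (steps η₁).map (fun p => (p.1, some (match p.2 with
        | some η₁' => SProg.seq η₁' η₂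
        | none => η₂)))
  | .choice η₁ η₂ => steps η₁ ++ steps η₂

/-- Summation (nondeterministic choice) of a finite list of programs; the empty
summation is the terminated process 𝟎. -/
def sumOf : List (Prog n C P) → Prog n C P
  | [] => .nil
  | [π] => π
  | π :: l => .choice π (sumOf l)

/-- The summand `a.(η₁ ‖ ⋯ ‖ ηₙ)` of the expansion; if all components have
terminated it is just the action `a` itself. -/
def summand (a : Act n C P) (f : Fin n → Option (SProg n C P)) : Prog n C P :=
  if (List.finRange n).all (fun i => (f i).isNone) then .seqp (.act a)
  else .pre a (.par f)

/-- The interleaving summands of the expansion of `η₁ ‖ ⋯ ‖ ηₙ`. -/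
def interleaveSummands (f : Fin n → Option (SProg n C P)) : List (Prog n C P) :=
  (List.finRange n).flatMap fun i =>
    match f i with
    | none => []
    | some η => (steps η).filterMap fun p =>
        if p.1.nonComm then some (summand p.1 (Function.update f i p.2)) else none

/-- The communication summands of the expansion of `η₁ ‖ ⋯ ‖ ηₙ`. -/
def commSummands [DecidableEq C] (f : Fin n → Option (SProg n C P)) : List (Prog n C P) :=
  (List.finRange n).flatMap fun i =>
    (List.finRange n).flatMap fun j =>
      if i = j then []
      else
        match f i, f j with
        | some ηi, some ηj =>
            (steps ηi).flatMap fun p =>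
              match p with
              | (Act.out ch, ri) =>
                  (steps ηj).filterMap fun q =>
                    match q with
                    | (Act.inp ch', rj) =>
                        if ch' = ch then
                          some (summand (.tau i j ch)
                            (Function.update (Function.update f i ri) j rj))
                        else none
                    | _ => none
              | _ => []
        | _, _ => []

/-- `Exp (η₁ ‖ ⋯ ‖ ηₙ)`: the expansion of a parallel composition as the
summation of all its single-component (non-communication) transitions and all
its communication (τ) transitions. -/
def Exp [DecidableEq C] (f : Fin n → Option (SProg n C P)) : Prog n C P :=
  sumOf (interleaveSummands f ++ commSummands f)

/-- The number of possible communications of `η₁ ‖ ⋯ ‖ ηₙ`: the number of pairs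
`(i, j)` such that `ηᵢ` can perform an output and `η_j` the matching input. -/
noncomputable def commCount (f : Fin n → Option (SProg n C P)) : ℕ :=
  Set.ncard {ij : Fin n × Fin n | ij.1 ≠ ij.2 ∧ ∃ ch ηi ηj ri rj,
    f ij.1 = some ηi ∧ f ij.2 = some ηj ∧
    STrans ηi (.out ch) ri ∧ STrans ηj (.inp ch) rj}

mutual
/-- Complexity of an atomic action: a pointed action model has complexity the
maximum of the complexities of its preconditions; communication actions and
silent actions have complexity 1. -/
noncomputable def cAct : Act n C P → ℕ
  | .am k _ pr _ => (List.finRange k).foldr (fun t m => max (cF (pr t)) m) 0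
  | .inp _ => 1
  | .out _ => 1
  | .tau _ _ _ => 1

/-- Complexity of sequential programs. -/
noncomputable def cS : SProg n C P → ℕ
  | .act a => cAct a
  | .pre _ η => 1 + cS η
  | .seq η₁ η₂ => 1 + cS η₁ + cS η₂
  | .choice η₁ η₂ => 2 + max (cS η₁) (cS η₂)

/-- Complexity of an optional component (a terminated component contributes 0). -/
noncomputable def cOptS : Option (SProg n C P) → ℕ
  | none => 0
  | some η => cS η

/-- Complexity of programs. -/
noncomputable def cP : Prog n C P → ℕ
  | .nil => 1
  | .seqp η => cS η
  | .pre _ π => 1 + cP π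
  | .seq π₁ π₂ => 1 + cP π₁ + cP π₂
  | .choice π₁ π₂ => 2 + max (cP π₁) (cP π₂)
  | .par f => commCount f + ∑ i : Fin n, cOptS (f i)

/-- Complexity of formulas. -/
noncomputable def cF : Form n C P → ℕ
  | .atom _ => 1
  | .top => 1
  | .neg φ => 1 + cF φ
  | .and φ ψ => 1 + max (cF φ) (cF ψ)
  | .imp φ ψ => 2 + cF φ + cF ψ
  | .know _ φ => 1 + cF φ
  | .box .nil φ => 1 + cF φ
  | .box π φ => (4 + cP π) * cF φ
end

/-- The atomic program consisting of a single atomic action. -/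
def atomic (a : Act n C P) : Prog n C P := .seqp (.act a)

/-- The atomic program given by a pointed action model `(M,𝗌)` with `k` action
points, accessibility relations `rel`, preconditions `pr` and point `s`. -/
def amProg (k : ℕ) (rel : Fin n → Fin k → Fin k → Bool)
    (pr : Fin k → Form n C P) (s : Fin k) : Prog n C P :=
  atomic (.am k rel pr s)


theorem STrans.of_mem_steps : ∀ (η : SProg n C P) (a : Act n C P) (r : Option (SProg n C P)),
    (a, r) ∈ steps η → STrans η a r
  | .act b, a, r, h => by
      simp only [steps, List.mem_singleton, Prod.mk.injEq] at h
      obtain ⟨rfl, rfl⟩ := h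
      exact .act
  | .pre b η, a, r, h => by
      simp only [steps, List.mem_singleton, Prod.mk.injEq] at h
      obtain ⟨rfl, rfl⟩ := h
      exact .pre
  | .seq η₁ η₂, a, r, h => by
      simp only [steps, List.mem_map, Prod.mk.injEq] at h
      obtain ⟨⟨b, s⟩, hs, rfl, rfl⟩ := h
      have ih := STrans.of_mem_steps η₁ b s hs
      cases s with
      | none => exact .seq₂ ih
      | some η₁' => exact .seq₁ ih
  | .choice η₁ η₂, a, r, h => by
      simp only [steps, List.mem_append] at h
      rcases h with h | h
      · exact .choiceL (STrans.of_mem_steps η₁ a r h)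
      · exact .choiceR (STrans.of_mem_steps η₂ a r h)

/-- The list `steps η` is sound and complete for the transitions of `η`. -/
theorem mem_steps {η : SProg n C P} {a : Act n C P} {r : Option (SProg n C P)} :
    (a, r) ∈ steps η ↔ STrans η a r := by
  refine ⟨STrans.of_mem_steps η a r, fun h => ?_⟩
  induction h with
  | act => simp [steps]
  | pre => simp [steps]
  | seq₁ _ ih => simp only [steps, List.mem_map]; exact ⟨_, ih, rfl⟩
  | seq₂ _ ih => simp only [steps, List.mem_map]; exact ⟨_, ih, rfl⟩
  | choiceL _ ih => simp [steps, ih]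
  | choiceR _ ih => simp [steps, ih]

theorem trans_choice {π₁ π₂ : Prog n C P} {a : Act n C P} {r : Option (Prog n C P)} :
    Trans (.choice π₁ π₂) a r ↔ Trans π₁ a r ∨ Trans π₂ a r := by
  constructor
  · intro h
    cases h with
    | choiceL h => exact .inl h
    | choiceR h => exact .inr h
  · rintro (h | h)
    · exact .choiceL h
    · exact .choiceR h

theorem trans_sumOf (l : List (Prog n C P)) {a : Act n C P} {r : Option (Prog n C P)} :
    Trans (sumOf l) a r ↔ ∃ π ∈ l, Trans π a r := by
  induction l with
  | nil =>
    simp only [sumOf, List.not_mem_nil, false_and, exists_false, iff_false]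
    intro h
    cases h
  | cons π l ih =>
    cases l with
    | nil => simp [sumOf]
    | cons π' l =>
      rw [sumOf.eq_3 _ _ (List.cons_ne_nil _ _), trans_choice, ih]
      exact (List.exists_mem_cons_iff (fun ρ => Trans ρ a r) _ _).symm

/-- A summand performs exactly one transition, to the same residual as the corresponding move of
the parallel composition. -/
theorem trans_summand {a b : Act n C P} {g : Fin n → Option (SProg n C P)}
    {r : Option (Prog n C P)} :
    Trans (summand a g) b r ↔ b = a ∧ r = parRes g := by
  unfold summand parRes
  split_ifs
  · constructor
    · intro h
      cases h with
      | seqp h => cases h; exact ⟨rfl, rfl⟩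
    · rintro ⟨rfl, rfl⟩
      exact .seqp .act
  · constructor
    · intro h
      cases h
      exact ⟨rfl, rfl⟩
    · rintro ⟨rfl, rfl⟩
      exact .pre

theorem mem_interleaveSummands {f : Fin n → Option (SProg n C P)} {π : Prog n C P} :
    π ∈ interleaveSummands f ↔ ∃ i η a r, f i = some η ∧ a.nonComm = true ∧ STrans η a r ∧
      π = summand a (Function.update f i r) := by
  simp only [interleaveSummands, List.mem_flatMap, List.mem_finRange, true_and]
  refine exists_congr fun i => ?_
  cases hi : f i with
  | none => simp
  | some η =>
    simp only [List.mem_filterMap, Prod.exists, Option.ite_none_right_eq_some, Option.some.injEq,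
      mem_steps]
    constructor
    · rintro ⟨a, r, hs, ha, rfl⟩
      exact ⟨η, a, r, rfl, ha, hs, rfl⟩
    · rintro ⟨_, a, r, rfl, ha, hs, rfl⟩
      exact ⟨a, r, hs, ha, rfl⟩

theorem mem_commSummands [DecidableEq C] {f : Fin n → Option (SProg n C P)} {π : Prog n C P} :
    π ∈ commSummands f ↔ ∃ i j ηi ηj ch ri rj, i ≠ j ∧ f i = some ηi ∧ f j = some ηj ∧
      STrans ηi (.out ch) ri ∧ STrans ηj (.inp ch) rj ∧
      π = summand (.tau i j ch) (Function.update (Function.update f i ri) j rj) := by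
  simp only [commSummands, List.mem_flatMap, List.mem_finRange, true_and]
  refine exists_congr fun i => exists_congr fun j => ?_
  by_cases hij : i = j
  · simp [hij]
  rw [if_neg hij]
  cases hi : f i with
  | none => simp
  | some ηi =>
    cases hj : f j with
    | none => simp
    | some ηj =>
      simp only [List.mem_flatMap]
      constructor
      · rintro ⟨⟨a, ri⟩, hp, h⟩
        cases a with
        | out ch =>
          simp only [List.mem_filterMap] at h
          obtain ⟨⟨b, rj⟩, hq, h⟩ := h
          cases b with
          | inp ch' =>
            simp only [Option.ite_none_right_eq_some, Option.some.injEq] at h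
            obtain ⟨rfl, rfl⟩ := h
            exact ⟨ηi, ηj, ch', ri, rj, hij, rfl, rfl, mem_steps.1 hp, mem_steps.1 hq, rfl⟩
          | am | out | tau => simp at h
        | am | inp | tau => simp at h
      · rintro ⟨_, _, ch, ri, rj, -, ⟨⟩, ⟨⟩, hp, hq, rfl⟩
        refine ⟨(.out ch, ri), mem_steps.2 hp, ?_⟩
        simp only [List.mem_filterMap]
        exact ⟨(.inp ch, rj), mem_steps.2 hq, by simp⟩

theorem trans_par_iff_trans_Exp [DecidableEq C] (f : Fin n → Option (SProg n C P))
    (a : Act n C P) (r : Option (Prog n C P)) :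
    Trans (.par f) a r ↔ Trans (Exp f) a r := by
  simp only [Exp, trans_sumOf, List.mem_append]
  constructor
  · intro h
    cases h with
    | par_act hi ha hs =>
      exact ⟨_, .inl (mem_interleaveSummands.2 ⟨_, _, _, _, hi, ha, hs, rfl⟩),
        trans_summand.2 ⟨rfl, rfl⟩⟩
    | par_comm hij hi hj ho hn =>
      exact ⟨_, .inr (mem_commSummands.2 ⟨_, _, _, _, _, _, _, hij, hi, hj, ho, hn, rfl⟩),
        trans_summand.2 ⟨rfl, rfl⟩⟩
  · rintro ⟨π, hπ | hπ, h⟩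
    · obtain ⟨i, η, b, s, hi, hb, hs, rfl⟩ := mem_interleaveSummands.1 hπ
      obtain ⟨rfl, rfl⟩ := trans_summand.1 h
      exact .par_act hi hb hs
    · obtain ⟨i, j, ηi, ηj, ch, ri, rj, hij, hi, hj, ho, hn, rfl⟩ := mem_commSummands.1 hπ
      obtain ⟨rfl, rfl⟩ := trans_summand.1 h
      exact .par_comm hij hi hj ho hn

theorem Bisim.of_trans_iff {π₁ π₂ : Prog n C P}
    (h : ∀ a r, Trans π₁ a r ↔ Trans π₂ a r) : Bisim π₁ π₂ :=
  ⟨fun ρ₁ ρ₂ => ∀ a r, Trans ρ₁ a r ↔ Trans ρ₂ a r,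
    fun _ _ hρ =>
      ⟨fun a ρ' ht => ⟨ρ', (hρ a _).1 ht, fun _ _ => Iff.rfl⟩,
        fun a ρ' ht => ⟨ρ', (hρ a _).2 ht, fun _ _ => Iff.rfl⟩,
        fun a => hρ a none⟩,
    h⟩

/-- **Expansion Law.** Every parallel program `η₁ ‖ ⋯ ‖ ηₙ` of the DELWCA
process calculus is strongly bisimilar to its expansion
`Exp (η₁ ‖ ⋯ ‖ ηₙ)`, the summation of `α.(η₁ ‖ ⋯ ‖ ηᵢ′ ‖ ⋯ ‖ ηₙ)` over all
single-component transitions `ηᵢ →α ηᵢ′` together with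
`τ_{i,j}.(η₁ ‖ ⋯ ‖ ηᵢ′ ‖ ⋯ ‖ η_j′ ‖ ⋯ ‖ ηₙ)` over all pairs of matching
communication transitions. -/
theorem expansion_law {n : ℕ} {C P : Type} [DecidableEq C]
    (f : Fin n → Option (SProg n C P)) :
    Bisim (Prog.par f) (Exp f) := by
  exact Bisim.of_trans_iff (trans_par_iff_trans_Exp f)

end DELWCA
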